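/- Let G and H be additive commutative groups and ψ: G → H a surjective group homomorphism. The kernel of ψ is finite if and only if for every G-graded commutative ring R the ψ-coarsening functor •_[ψ]: GrMod^G(R) → GrMod^H(R_[ψ]) sends injective objects to injective objects. -/

import Mathlib

/-!
Common vocabulary: internally graded rings and modules, coarsening of gradings,
graded morphisms, and derived notions (injectivity, cogenerators, smallness, ...),
following Rohrer, "Coarsenings, injectives and Hom functors".
-/

open DirectSum

section Defs

variable {G H R : Type} [AddCommGroup G] [AddCommGroup H] [CommRing R]

/-- The `ψ`-coarsening of a `G`-grading: `(ℳ_[ψ])_h = ⨁_{g ∈ ψ⁻¹(h)} ℳ_g`. -/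
def coarsen {M : Type} [AddCommGroup M] (ψ : G →+ H) (ℳ : G → AddSubgroup M) (h : H) :
    AddSubgroup M :=
  ⨆ g ∈ ψ ⁻¹' {h}, ℳ g

/-- `(R, 𝒜)` is a `G`-graded commutative ring: the `𝒜 g` are additive subgroups whose
internal direct sum is `R`, and `𝒜 g * 𝒜 h ⊆ 𝒜 (g + h)`. -/
def IsGradedRing (𝒜 : G → AddSubgroup R) : Prop :=
  (1 : R) ∈ 𝒜 0 ∧
  (∀ {g h : G} {a b : R}, a ∈ 𝒜 g → b ∈ 𝒜 h → a * b ∈ 𝒜 (g + h)) ∧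
  (letI := Classical.decEq G; DirectSum.IsInternal 𝒜)

/-- `(M, ℳ)` is a `G`-graded module over the `G`-graded ring `(R, 𝒜)`. -/
def IsGradedModule {M : Type} [AddCommGroup M] [Module R M]
    (𝒜 : G → AddSubgroup R) (ℳ : G → AddSubgroup M) : Prop :=
  (∀ {g h : G} {r : R} {m : M}, r ∈ 𝒜 g → m ∈ ℳ h → r • m ∈ ℳ (g + h)) ∧
  (letI := Classical.decEq G; DirectSum.IsInternal ℳ)

/-- A morphism of `G`-graded `R`-modules is an `R`-linear map respecting the gradings. -/
def IsGradedHom {M N : Type} [AddCommGroup M] [Module R M]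
    [AddCommGroup N] [Module R N] (ℳ : G → AddSubgroup M) (𝒩 : G → AddSubgroup N)
    (f : M →ₗ[R] N) : Prop :=
  ∀ g : G, ∀ m ∈ ℳ g, f m ∈ 𝒩 g

/-- The grading of a direct sum of graded modules:
`(⨁_i N_i)_g` consists of the elements all of whose components lie in degree `g`. -/
def directSumGrading {ι : Type} {M : ι → Type}
    [∀ i, AddCommGroup (M i)] (ℳ : ∀ i, G → AddSubgroup (M i)) (g : G) :
    AddSubgroup (⨁ i, M i) where
  carrier := {x | ∀ i, x i ∈ ℳ i g}
  zero_mem' := fun i => by simp only [DirectSum.zero_apply, ZeroMemClass.zero_mem]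
  add_mem' := fun {x y} hx hy i => by
    rw [DirectSum.add_apply]; exact add_mem (hx i) (hy i)
  neg_mem' := fun {x} hx i => by
    rw [DFinsupp.neg_apply]; exact neg_mem (hx i)

/-- `(E, ℰ)` is an injective object of the category of `G`-graded `R`-modules:
every graded morphism into `E` extends along every injective graded morphism. -/
def IsInjectiveGradedModule (𝒜 : G → AddSubgroup R) {E : Type} [AddCommGroup E] [Module R E]
    (ℰ : G → AddSubgroup E) : Prop :=
  ∀ (A B : Type) [AddCommGroup A] [Module R A] [AddCommGroup B] [Module R B],
    ∀ (𝒮A : G → AddSubgroup A) (𝒮B : G → AddSubgroup B),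
      IsGradedModule 𝒜 𝒮A → IsGradedModule 𝒜 𝒮B →
      ∀ i : A →ₗ[R] B, Function.Injective i → IsGradedHom 𝒮A 𝒮B i →
      ∀ f : A →ₗ[R] E, IsGradedHom 𝒮A ℰ f →
      ∃ g : B →ₗ[R] E, IsGradedHom 𝒮B ℰ g ∧ g ∘ₗ i = f

/-- `(M, ℳ)` is a cogenerator of the category of `G`-graded `R`-modules: every nonzero
graded morphism is detected by a graded morphism into `M`. -/
def IsCogenerator (𝒜 : G → AddSubgroup R) {M : Type} [AddCommGroup M] [Module R M]
    (ℳ : G → AddSubgroup M) : Prop :=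
  ∀ (N N' : Type) [AddCommGroup N] [Module R N] [AddCommGroup N'] [Module R N'],
    ∀ (𝒩 : G → AddSubgroup N) (𝒩' : G → AddSubgroup N'),
      IsGradedModule 𝒜 𝒩 → IsGradedModule 𝒜 𝒩' →
      ∀ u : N →ₗ[R] N', IsGradedHom 𝒩 𝒩' u → u ≠ 0 →
      ∃ v : N' →ₗ[R] M, IsGradedHom 𝒩' ℳ v ∧ v ∘ₗ u ≠ 0

/-- `M` is a small graded module: every graded morphism from `M` into a direct sum of
graded modules factors through a finite sub-sum. -/
def IsSmall (𝒜 : G → AddSubgroup R) {M : Type} [AddCommGroup M] [Module R M]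
    (ℳ : G → AddSubgroup M) : Prop :=
  ∀ (ι : Type) (N : ι → Type) [∀ i, AddCommGroup (N i)] [∀ i, Module R (N i)],
    ∀ (𝒩 : ∀ i, G → AddSubgroup (N i)), (∀ i, IsGradedModule 𝒜 (𝒩 i)) →
      ∀ f : M →ₗ[R] ⨁ i, N i, IsGradedHom ℳ (directSumGrading 𝒩) f →
        ∃ s : Finset ι, ∀ (m : M) (i : ι), i ∉ s → f m i = 0

/-- `M` is `P`-small: every graded morphism from `M` into a direct sum of copies of `P`
factors through a finite sub-sum. -/
def IsSmallWrt {P : Type} [AddCommGroup P] [Module R P] (𝒬 : G → AddSubgroup P)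
    {M : Type} [AddCommGroup M] [Module R M] (ℳ : G → AddSubgroup M) : Prop :=
  ∀ (ι : Type) (f : M →ₗ[R] ⨁ (_ : ι), P),
    IsGradedHom ℳ (directSumGrading fun (_ : ι) => 𝒬) f →
      ∃ s : Finset ι, ∀ (m : M) (i : ι), i ∉ s → f m i = 0

/-- A `G`-graded ring is steady if all small graded modules over it are finitely generated. -/
def IsSteady (𝒜 : G → AddSubgroup R) : Prop :=
  ∀ (M : Type) [AddCommGroup M] [Module R M], ∀ ℳ : G → AddSubgroup M,
    IsGradedModule 𝒜 ℳ → IsSmall 𝒜 ℳ → Module.Finite R M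

/-- A graded ideal of the `G`-graded ring `(R, 𝒜)`: `I = ⨁_g (I ∩ R_g)`. -/
def IsGradedIdeal (𝒜 : G → AddSubgroup R) (I : Ideal R) : Prop :=
  I.toAddSubgroup = ⨆ g : G, I.toAddSubgroup ⊓ 𝒜 g

/-- A simple `G`-graded `R`-module: nonzero, and its only graded submodules are `0` and
the whole module. -/
def IsSimpleGradedModule (𝒜 : G → AddSubgroup R) {S : Type} [AddCommGroup S] [Module R S]
    (𝒮 : G → AddSubgroup S) : Prop :=
  IsGradedModule 𝒜 𝒮 ∧ Nontrivial S ∧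
    ∀ P : Submodule R S, (P.toAddSubgroup = ⨆ g : G, P.toAddSubgroup ⊓ 𝒮 g) →
      P = ⊥ ∨ P = ⊤

/-- The subgroup of `M →ₗ[R] N` consisting of the graded morphisms `M → N(g)`, i.e. the
degree-`g` component of the graded Hom module `⨁HOM(M, N)`. -/
def gradedHomSubgroup {M N : Type} [AddCommGroup M] [Module R M] [AddCommGroup N] [Module R N]
    (ℳ : G → AddSubgroup M) (𝒩 : G → AddSubgroup N) (g : G) : AddSubgroup (M →ₗ[R] N) where
  carrier := {u | ∀ g' : G, ∀ m ∈ ℳ g', u m ∈ 𝒩 (g + g')}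
  zero_mem' := fun g' m _ => by simp only [LinearMap.zero_apply, ZeroMemClass.zero_mem]
  add_mem' := fun {u v} hu hv g' m hm => by
    rw [LinearMap.add_apply]; exact add_mem (hu g' m hm) (hv g' m hm)
  neg_mem' := fun {u} hu g' m hm => by
    rw [LinearMap.neg_apply]; exact neg_mem (hu g' m hm)

end Defs

/-!
If `ker ψ` is finite, so is every fiber of `ψ`. Let `M` be a graded injective `R`-module and let
`i : A → B` and `f : A → M` be morphisms of modules graded by `H`. Forget the gradings of `A` and
`B`, and pass to the cofree `G`-graded modules on them: the components of `f` assemble to a graded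
morphism on the one on `A`, which extends along `i` to the one on `B`. Summing the extension over
the fiber of `ψ` over `h` recovers an extension of `f` in degree `h`.

Conversely, let `R = ℤ ^ ker ψ`, trivially graded, let `E` be its character module, which is
injective, and let `M` be the cofree graded module on `E`, which is graded injective. For each
`n ∈ ker ψ` choose `x n` in `M` of degree `n` that the idempotent `e n` of `R` does not annihilate.
The rule `e n ↦ e n • x n` defines a morphism on the ideal of finitely supported functions, with
values in degree `0` for the coarsened grading. If it extends to `R`, then the image of `1` has a
nonzero component in every degree `n ∈ ker ψ`, so `ker ψ` is finite.
-/

section Homogeneous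

variable {ι κ R M N : Type*} [AddCommGroup M] [AddCommGroup N]

theorem iSup_eq_top_of_decomposition [DecidableEq ι] (ℳ : ι → AddSubgroup M)
    [DirectSum.Decomposition ℳ] : iSup ℳ = ⊤ :=
  eq_top_iff.2 fun m _ =>
    DirectSum.Decomposition.inductionOn ℳ (motive := (· ∈ iSup ℳ)) (zero_mem _)
      (fun m => le_iSup ℳ _ m.2) (fun _ _ => add_mem) m

theorem addMonoidHom_ext_of_homogeneous {ℳ : ι → AddSubgroup M} (hℳ : iSup ℳ = ⊤)
    {f f' : M →+ N} (h : ∀ i, ∀ m ∈ ℳ i, f m = f' m) : f = f' := by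
  have hle : iSup ℳ ≤ f.eqLocus f' := iSup_le h
  ext m
  exact hle (hℳ ▸ AddSubgroup.mem_top m)

theorem map_smul_of_homogeneous [CommRing R] [Module R M] [Module R N]
    {𝒜 : ι → AddSubgroup R} {ℳ : κ → AddSubgroup M} (h𝒜 : iSup 𝒜 = ⊤) (hℳ : iSup ℳ = ⊤)
    (f : M →+ N) (h : ∀ i, ∀ r ∈ 𝒜 i, ∀ j, ∀ m ∈ ℳ j, f (r • m) = r • f m) (r : R) (m : M) :
    f (r • m) = r • f m := by
  have hbilinear : (AddMonoidHom.compHom f).comp (smulAddHom R M) =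
      ((smulAddHom R N).flip.comp f).flip :=
    addMonoidHom_ext_of_homogeneous h𝒜 fun i r hr =>
      addMonoidHom_ext_of_homogeneous hℳ fun j m hm => h i r hr j m hm
  exact DFunLike.congr_fun (DFunLike.congr_fun hbilinear r) m

variable [DecidableEq ι] (ℳ : ι → AddSubgroup M) [DirectSum.Decomposition ℳ]

/-- The additive map that agrees with `φ i` on the homogeneous elements of degree `i`. -/
def homogeneousLift (φ : ι → M →+ N) : M →+ N :=
  (DirectSum.toAddMonoid fun i => (φ i).comp (ℳ i).subtype).comp
    (DirectSum.decomposeAddEquiv ℳ).toAddMonoidHom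

theorem homogeneousLift_of_mem (φ : ι → M →+ N) {i : ι} {m : M} (hm : m ∈ ℳ i) :
    homogeneousLift ℳ φ m = φ i m := by
  simp [homogeneousLift, DirectSum.decompose_of_mem ℳ hm]

/-- The projection of `M` onto its component of degree `i`, as an endomorphism of `M`. -/
def homogeneousComponent (i : ι) : M →+ M :=
  (ℳ i).subtype.comp
    ((DFinsupp.evalAddMonoidHom i).comp (DirectSum.decomposeAddEquiv ℳ).toAddMonoidHom)

theorem homogeneousComponent_mem (i : ι) (m : M) : homogeneousComponent ℳ i m ∈ ℳ i :=
  (DirectSum.decompose ℳ m i).2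

theorem homogeneousComponent_of_mem {i : ι} {m : M} (hm : m ∈ ℳ i) (j : ι) :
    homogeneousComponent ℳ j m = if j = i then m else 0 := by
  split_ifs with hji
  · subst hji
    exact DirectSum.decompose_of_mem_same ℳ hm
  · exact DirectSum.decompose_of_mem_ne ℳ hm (Ne.symm hji)

theorem finite_setOf_homogeneousComponent_ne_zero (m : M) :
    {i | homogeneousComponent ℳ i m ≠ 0}.Finite := by
  classical
  refine (DirectSum.decompose ℳ m).support.finite_toSet.subset fun i hi => ?_
  exact DFinsupp.mem_support_iff.2 fun h0 => hi (congrArg (ℳ i).subtype h0)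

end Homogeneous

section GradedModule

variable {G R M : Type} [AddCommGroup G] [CommRing R] [AddCommGroup M] [Module R M]
  {𝒜 : G → AddSubgroup R} {ℳ : G → AddSubgroup M}

theorem IsGradedRing.isInternal [DecidableEq G] (h : IsGradedRing 𝒜) :
    DirectSum.IsInternal 𝒜 := by
  convert h.2.2

theorem IsGradedModule.isInternal [DecidableEq G] (h : IsGradedModule 𝒜 ℳ) :
    DirectSum.IsInternal ℳ := by
  convert h.2

theorem IsGradedRing.iSup_eq_top (h : IsGradedRing 𝒜) : iSup 𝒜 = ⊤ := by
  classical
  let := h.isInternal.chooseDecomposition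
  exact iSup_eq_top_of_decomposition 𝒜

theorem IsGradedModule.iSup_eq_top (h : IsGradedModule 𝒜 ℳ) : iSup ℳ = ⊤ := by
  classical
  let := h.isInternal.chooseDecomposition
  exact iSup_eq_top_of_decomposition ℳ

/-- The library's structure of a graded ring underlying `IsGradedRing`. -/
@[reducible]
noncomputable def IsGradedRing.toGradedRing [DecidableEq G] (h : IsGradedRing 𝒜) :
    GradedRing 𝒜 where
  one_mem := h.1
  mul_mem _ _ _ _ := h.2.1
  toDecomposition := h.isInternal.chooseDecomposition

theorem IsGradedModule.homogeneousComponent_smul [DecidableEq G] [DirectSum.Decomposition ℳ]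
    (h : IsGradedModule 𝒜 ℳ) {g : G} {r : R} (hr : r ∈ 𝒜 g) (g' : G) (m : M) :
    homogeneousComponent ℳ (g + g') (r • m) = r • homogeneousComponent ℳ g' m := by
  have hhom : (homogeneousComponent ℳ (g + g')).comp (smulAddHom R M r) =
      (smulAddHom R M r).comp (homogeneousComponent ℳ g') :=
    addMonoidHom_ext_of_homogeneous h.iSup_eq_top fun g'' m hm => by
      simp [homogeneousComponent_of_mem ℳ hm, homogeneousComponent_of_mem ℳ (h.1 hr hm)]
  exact DFunLike.congr_fun hhom m

theorem exists_isGradedHom_comp_eq {A B E : Type} [AddCommGroup A] [Module R A]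
    [AddCommGroup B] [Module R B] [AddCommGroup E] [Module R E]
    {𝒮A : G → AddSubgroup A} {𝒮B : G → AddSubgroup B} {ℰ : G → AddSubgroup E}
    (h𝒜 : iSup 𝒜 = ⊤) (hA : IsGradedModule 𝒜 𝒮A) (hB : IsGradedModule 𝒜 𝒮B)
    {i : A →ₗ[R] B} (hi : IsGradedHom 𝒮A 𝒮B i) {f : A →ₗ[R] E} (φ : G → B →+ E)
    (hφ_mem : ∀ g, ∀ b ∈ 𝒮B g, φ g b ∈ ℰ g)
    (hφ_smul : ∀ g, ∀ r ∈ 𝒜 g, ∀ g' b, φ (g + g') (r • b) = r • φ g' b)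
    (hφ_comp : ∀ g, ∀ a ∈ 𝒮A g, φ g (i a) = f a) :
    ∃ k : B →ₗ[R] E, IsGradedHom 𝒮B ℰ k ∧ k ∘ₗ i = f := by
  classical
  let := hB.isInternal.chooseDecomposition
  have hφ {g : G} {b : B} : b ∈ 𝒮B g → homogeneousLift 𝒮B φ b = φ g b :=
    homogeneousLift_of_mem 𝒮B φ
  have hsmul : ∀ g, ∀ r ∈ 𝒜 g, ∀ g', ∀ b ∈ 𝒮B g',
      homogeneousLift 𝒮B φ (r • b) = r • homogeneousLift 𝒮B φ b := fun g r hr g' b hb => by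
    rw [hφ hb, hφ (hB.1 hr hb), hφ_smul g r hr]
  let k : B →ₗ[R] E :=
    { homogeneousLift 𝒮B φ with
      map_smul' := map_smul_of_homogeneous h𝒜 hB.iSup_eq_top (homogeneousLift 𝒮B φ) hsmul }
  refine ⟨k, fun g b hb => (hφ hb).symm ▸ hφ_mem g b hb, LinearMap.toAddMonoidHom_injective ?_⟩
  exact addMonoidHom_ext_of_homogeneous hA.iSup_eq_top fun g a ha =>
    (hφ (hi g a ha)).trans (hφ_comp g a ha)

end GradedModule

section Cofree

variable {G R : Type} [DecidableEq G] [CommRing R]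

/-- The cofree graded module on an `R`-module `N`, the value at `N` of the right adjoint of the
functor that forgets the grading. It consists of one copy of `N` for each degree, a scalar of
degree `g` carrying the copy of degree `g'` to that of degree `g + g'`. The type records `𝒜`
because the scalar action depends on it. -/
def Cofree (_ : G → AddSubgroup R) (N : Type) [AddCommGroup N] : Type :=
  ⨁ _ : G, N

namespace Cofree

variable (𝒜 : G → AddSubgroup R) (N : Type) [AddCommGroup N]

instance : AddCommGroup (Cofree 𝒜 N) :=
  inferInstanceAs (AddCommGroup (⨁ _ : G, N))

/-- The inclusion of the copy of `N` of degree `g`. -/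
def of (g : G) : N →+ Cofree 𝒜 N :=
  DirectSum.of (fun _ : G => N) g

/-- The additive map out of a cofree graded module given by `φ g` on the copy of `N` of
degree `g`. -/
def liftAddHom {M : Type*} [AddCommGroup M] (φ : G → N →+ M) : Cofree 𝒜 N →+ M :=
  DirectSum.toAddMonoid φ

variable {N} in
theorem liftAddHom_of {M : Type*} [AddCommGroup M] (φ : G → N →+ M) (g : G) (n : N) :
    liftAddHom 𝒜 N φ (of 𝒜 N g n) = φ g n :=
  DirectSum.toAddMonoid_of φ g n

theorem of_injective (g : G) : Function.Injective (of 𝒜 N g) :=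
  DirectSum.of_injective (β := fun _ : G => N) g

/-- The grading by the copies of `N`. -/
def grading (g : G) : AddSubgroup (Cofree 𝒜 N) :=
  (of 𝒜 N g).range

variable {N} in
theorem of_mem_grading (g : G) (n : N) : of 𝒜 N g n ∈ grading 𝒜 N g :=
  ⟨n, rfl⟩

variable {𝒜 N} in
theorem addHom_ext {M : Type*} [AddCommGroup M] {f f' : Cofree 𝒜 N →+ M}
    (h : ∀ g n, f (of 𝒜 N g n) = f' (of 𝒜 N g n)) : f = f' :=
  DirectSum.addHom_ext h

noncomputable instance : DirectSum.Decomposition (grading 𝒜 N) :=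
  DirectSum.Decomposition.ofAddHom (grading 𝒜 N)
    (liftAddHom 𝒜 N fun g =>
      (DirectSum.of (fun g => grading 𝒜 N g) g).comp (of 𝒜 N g).rangeRestrict)
    (addHom_ext fun g n => by
      rw [AddMonoidHom.comp_apply, liftAddHom_of]
      exact DirectSum.coeAddMonoidHom_of _ _ _)
    (by
      ext g ⟨_, n, rfl⟩ : 2
      rw [AddMonoidHom.comp_assoc, AddMonoidHom.comp_apply, AddMonoidHom.comp_apply,
        DirectSum.coeAddMonoidHom_of]
      exact liftAddHom_of 𝒜 _ g n)

variable [AddCommGroup G] [Module R N] [GradedRing 𝒜]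

instance : DirectSum.Gmodule (fun g => 𝒜 g) (fun _ : G => N) where
  smul r n := (r : R) • n
  one_smul n := Sigma.ext (zero_add _) (heq_of_eq (one_smul R n.2))
  mul_smul r s n := Sigma.ext (add_assoc _ _ _) (heq_of_eq (mul_smul (r.2 : R) (s.2 : R) n.2))
  smul_add r := smul_add (r : R)
  smul_zero r := smul_zero (r : R)
  add_smul r s := add_smul (r : R) (s : R)
  zero_smul := zero_smul R

noncomputable instance : Module R (Cofree 𝒜 N) :=
  letI : Module (⨁ g, 𝒜 g) (Cofree 𝒜 N) :=
    inferInstanceAs (Module (⨁ g, 𝒜 g) (⨁ _ : G, N))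
  Module.compHom _ (DirectSum.decomposeRingEquiv 𝒜).toRingHom

variable {𝒜 N}

theorem smul_of {g : G} {r : R} (hr : r ∈ 𝒜 g) (g' : G) (n : N) :
    r • of 𝒜 N g' n = of 𝒜 N (g + g') (r • n) := by
  change DirectSum.decompose 𝒜 r • DirectSum.of (fun _ : G => N) g' n = _
  rw [DirectSum.decompose_of_mem 𝒜 hr]
  exact DirectSum.Gmodule.of_smul_of (fun g => 𝒜 g) (fun _ : G => N) _ n

variable (𝒜 N) in
theorem isGradedModule : IsGradedModule 𝒜 (grading 𝒜 N) := by
  constructor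
  · rintro g g' r _ hr ⟨n, rfl⟩
    exact ⟨r • n, (smul_of hr g' n).symm⟩
  · convert DirectSum.Decomposition.isInternal (grading 𝒜 N)

variable {M : Type} [AddCommGroup M] [Module R M]

/-- The linear map out of a cofree graded module given by `φ g` on the copy of `N` of
degree `g`. -/
noncomputable def lift (φ : G → N →+ M)
    (hφ : ∀ g, ∀ r ∈ 𝒜 g, ∀ g' n, φ (g + g') (r • n) = r • φ g' n) : Cofree 𝒜 N →ₗ[R] M :=
  { liftAddHom 𝒜 N φ with
    map_smul' := map_smul_of_homogeneous (iSup_eq_top_of_decomposition 𝒜)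
      (iSup_eq_top_of_decomposition (grading 𝒜 N)) (liftAddHom 𝒜 N φ) (by
        rintro g r hr g' _ ⟨n, rfl⟩
        rw [smul_of hr, liftAddHom_of, liftAddHom_of, hφ g r hr]) }

theorem lift_of (φ : G → N →+ M)
    (hφ : ∀ g, ∀ r ∈ 𝒜 g, ∀ g' n, φ (g + g') (r • n) = r • φ g' n) (g : G) (n : N) :
    lift φ hφ (of 𝒜 N g n) = φ g n :=
  liftAddHom_of 𝒜 φ g n

/-- The functor `Cofree 𝒜` on morphisms. -/
noncomputable def map (i : N →ₗ[R] M) : Cofree 𝒜 N →ₗ[R] Cofree 𝒜 M :=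
  lift (fun g => (of 𝒜 M g).comp i.toAddMonoidHom) fun g r hr g' n => by
    simp [smul_of hr]

theorem map_of (i : N →ₗ[R] M) (g : G) (n : N) :
    map i (of 𝒜 N g n) = of 𝒜 M g (i n) :=
  lift_of _ _ g n

theorem map_injective {i : N →ₗ[R] M} (hi : Function.Injective i) :
    Function.Injective (map (𝒜 := 𝒜) i) := by
  have hmap : (map (𝒜 := 𝒜) i).toAddMonoidHom = DirectSum.map fun _ => i.toAddMonoidHom :=
    addHom_ext fun g n => (map_of i g n).trans
      (DirectSum.map_of (α := fun _ : G => N) (fun _ => i.toAddMonoidHom) g n).symm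
  intro x y hxy
  refine (DirectSum.map_injective fun _ : G => i.toAddMonoidHom).2 (fun _ => hi) ?_
  rw [← hmap]
  exact hxy

theorem isGradedHom_map (i : N →ₗ[R] M) :
    IsGradedHom (grading 𝒜 N) (grading 𝒜 M) (map i) := by
  rintro g _ ⟨n, rfl⟩
  exact ⟨i n, (map_of i g n).symm⟩

variable {ℳ : G → AddSubgroup M} [DirectSum.Decomposition ℳ]

/-- The graded morphism `Cofree 𝒜 N → M` sending the copy of `n` of degree `g` to the component
of degree `g` of `f n`. -/
noncomputable def components (hℳ : IsGradedModule 𝒜 ℳ) (f : N →ₗ[R] M) : Cofree 𝒜 N →ₗ[R] M :=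
  lift (fun g => (homogeneousComponent ℳ g).comp f.toAddMonoidHom) fun g r hr g' n => by
    simpa using hℳ.homogeneousComponent_smul hr g' (f n)

theorem components_of (hℳ : IsGradedModule 𝒜 ℳ) (f : N →ₗ[R] M) (g : G) (n : N) :
    components hℳ f (of 𝒜 N g n) = homogeneousComponent ℳ g (f n) :=
  lift_of _ _ g n

theorem isGradedHom_components (hℳ : IsGradedModule 𝒜 ℳ) (f : N →ₗ[R] M) :
    IsGradedHom (grading 𝒜 N) ℳ (components hℳ f) := by
  rintro g _ ⟨n, rfl⟩
  exact (components_of hℳ f g n).symm ▸ homogeneousComponent_mem ℳ g (f n)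

variable (𝒜 N) in
/-- The counit of the adjunction between forgetting the grading and `Cofree`. -/
noncomputable def counit : Cofree 𝒜 N →ₗ[R] N :=
  lift (fun _ => AddMonoidHom.id N) fun _ _ _ _ _ => rfl

theorem counit_of (g : G) (n : N) : counit 𝒜 N (of 𝒜 N g n) = n :=
  lift_of _ _ g n

variable (𝒜 N) in
theorem isInjectiveGradedModule [Module.Injective R N] :
    IsInjectiveGradedModule 𝒜 (grading 𝒜 N) := by
  intro A B _ _ _ _ 𝒮A 𝒮B hA hB i hi hi_graded f hf
  obtain ⟨F, hF⟩ := Module.Injective.extension_property R N A B i hi (counit 𝒜 N ∘ₗ f)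
  refine exists_isGradedHom_comp_eq (iSup_eq_top_of_decomposition 𝒜) hA hB hi_graded
    (fun g => (of 𝒜 N g).comp F.toAddMonoidHom) (fun g b _ => of_mem_grading 𝒜 g (F b))
    (fun g r hr g' b => ?_) fun g a ha => ?_
  · simp [smul_of hr]
  · obtain ⟨n, hn⟩ := hf g a ha
    have hFi : F (i a) = n := by
      rw [← LinearMap.comp_apply, hF, LinearMap.comp_apply, ← hn, counit_of]
    exact (congrArg (of 𝒜 N g) hFi).trans hn

end Cofree

end Cofree

theorem finite_fiber_of_finite_ker {G H : Type*} [AddGroup G] [AddGroup H] (ψ : G →+ H)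
    [Finite ψ.ker] (h : H) : (ψ ⁻¹' {h}).Finite := by
  obtain hempty | ⟨g, rfl⟩ := (ψ ⁻¹' {h}).eq_empty_or_nonempty
  · exact hempty ▸ Set.finite_empty
  · exact @Set.toFinite _ _ (Finite.of_equiv _ (ψ.fiberEquivKer g).symm)

section Coarsening

variable {G H M N : Type} [AddCommGroup G] [AddCommGroup H] [AddCommGroup M] {ψ : G →+ H}
  {ℳ : G → AddSubgroup M}

theorem mem_coarsen {g : G} {m : M} (hm : m ∈ ℳ g) : m ∈ coarsen ψ ℳ (ψ g) :=
  le_iSup₂_of_le (f := fun g' (_ : g' ∈ ψ ⁻¹' {ψ g}) => ℳ g') g rfl le_rfl hm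

theorem iSup_coarsen : iSup (coarsen ψ ℳ) = iSup ℳ :=
  le_antisymm (iSup_le fun _ => iSup₂_le fun g _ => le_iSup ℳ g)
    (iSup_le fun g => le_iSup_of_le (ψ g) fun _ => mem_coarsen)

theorem eqOn_coarsen [AddCommGroup N] {f f' : M →+ N} {h : H}
    (hff' : ∀ g, ψ g = h → ∀ m ∈ ℳ g, f m = f' m) {m : M} (hm : m ∈ coarsen ψ ℳ h) :
    f m = f' m :=
  have hle : coarsen ψ ℳ h ≤ f.eqLocus f' := iSup₂_le hff'
  hle hm

variable (hψ : ∀ h, (ψ ⁻¹' {h}).Finite)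

theorem sum_homogeneousComponent_fiber [DecidableEq G] [DirectSum.Decomposition ℳ] {h : H}
    {m : M} (hm : m ∈ coarsen ψ ℳ h) :
    ∑ g ∈ (hψ h).toFinset, homogeneousComponent ℳ g m = m := by
  rw [← AddMonoidHom.finsetSum_apply]
  refine eqOn_coarsen (f' := AddMonoidHom.id M) (fun g hg m hm => ?_) hm
  simp [homogeneousComponent_of_mem ℳ hm, hg]

variable {R : Type} [CommRing R] [Module R M] {𝒜 : G → AddSubgroup R} [AddCommGroup N]
  [Module R N] [DecidableEq G] [GradedRing 𝒜]

/-- For `F : Cofree 𝒜 N → M`, the map sending `n` to the sum of the values of `F` at the copies of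
`n` with degree in the fiber over `h`. -/
noncomputable def fiberSum (F : Cofree 𝒜 N →ₗ[R] M) (h : H) : N →+ M :=
  ∑ g ∈ (hψ h).toFinset, F.toAddMonoidHom.comp (Cofree.of 𝒜 N g)

theorem fiberSum_apply (F : Cofree 𝒜 N →ₗ[R] M) (h : H) (n : N) :
    fiberSum hψ F h n = ∑ g ∈ (hψ h).toFinset, F (Cofree.of 𝒜 N g n) :=
  AddMonoidHom.finsetSum_apply _ _ _

theorem fiberSum_mem {F : Cofree 𝒜 N →ₗ[R] M} (hF : IsGradedHom (Cofree.grading 𝒜 N) ℳ F)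
    (h : H) (n : N) : fiberSum hψ F h n ∈ coarsen ψ ℳ h := by
  rw [fiberSum_apply]
  refine sum_mem fun g hg => ?_
  obtain rfl : ψ g = h := by simpa using hg
  exact mem_coarsen (hF g _ ⟨n, rfl⟩)

theorem fiberSum_smul (F : Cofree 𝒜 N →ₗ[R] M) {h : H} {r : R} (hr : r ∈ coarsen ψ 𝒜 h)
    (h' : H) (n : N) : fiberSum hψ F (h + h') (r • n) = r • fiberSum hψ F h' n := by
  refine eqOn_coarsen (f := (fiberSum hψ F (h + h')).comp ((smulAddHom R N).flip n))
    (f' := (smulAddHom R M).flip (fiberSum hψ F h' n)) ?_ hr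
  rintro g rfl r hr
  change fiberSum hψ F (ψ g + h') (r • n) = r • fiberSum hψ F h' n
  rw [fiberSum_apply, fiberSum_apply, Finset.smul_sum]
  symm
  refine Finset.sum_bij (fun g' _ => g + g') (by simp) (by simp) (fun x hx => ?_) fun g' _ => ?_
  · exact ⟨x - g, by simpa [sub_eq_iff_eq_add'] using hx, add_sub_cancel g x⟩
  · rw [← map_smul, Cofree.smul_of hr]

omit [DecidableEq G] [GradedRing 𝒜] in
include hψ in
theorem IsInjectiveGradedModule.coarsen (h𝒜 : IsGradedRing 𝒜) (hℳ : IsGradedModule 𝒜 ℳ)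
    (hinj : IsInjectiveGradedModule 𝒜 ℳ) :
    IsInjectiveGradedModule (coarsen ψ 𝒜) (coarsen ψ ℳ) := by
  classical
  let := h𝒜.toGradedRing
  let := hℳ.isInternal.chooseDecomposition
  intro A B _ _ _ _ 𝒮A 𝒮B hA hB i hi hi_graded f hf
  obtain ⟨F, hF_graded, hF⟩ := hinj _ _ _ _ (Cofree.isGradedModule 𝒜 A)
    (Cofree.isGradedModule 𝒜 B) (Cofree.map i) (Cofree.map_injective hi)
    (Cofree.isGradedHom_map i) (Cofree.components hℳ f) (Cofree.isGradedHom_components hℳ f)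
  have hF_of (g : G) (a : A) : F (Cofree.of 𝒜 B g (i a)) = homogeneousComponent ℳ g (f a) := by
    rw [← Cofree.map_of, ← LinearMap.comp_apply, hF, Cofree.components_of]
  refine exists_isGradedHom_comp_eq (iSup_coarsen.trans h𝒜.iSup_eq_top) hA hB hi_graded
    (fiberSum hψ F) (fun h b _ => fiberSum_mem hψ hF_graded h b)
    (fun h r hr h' b => fiberSum_smul hψ F hr h' b) fun h a ha => ?_
  calc fiberSum hψ F h (i a)
      = ∑ g ∈ (hψ h).toFinset, homogeneousComponent ℳ g (f a) := by
        simp only [fiberSum_apply, hF_of]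
    _ = f a := sum_homogeneousComponent_fiber hψ (hf h a ha)

end Coarsening

section TrivialGrading

variable (G : Type) {H R M : Type} [AddCommGroup G] [AddCommGroup H] [CommRing R] [AddCommGroup M]
  [Module R M]

/-- The trivial grading, concentrated in degree `0`. -/
def trivialGrading (M : Type) [AddCommGroup M] (g : G) : AddSubgroup M :=
  ⨆ _ : g = 0, ⊤

theorem mem_trivialGrading_zero (m : M) : m ∈ trivialGrading G M 0 :=
  le_iSup (fun _ : (0 : G) = 0 => (⊤ : AddSubgroup M)) rfl trivial

variable {G} in
theorem eq_zero_or_of_mem_trivialGrading {g : G} {m : M} (hm : m ∈ trivialGrading G M g) :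
    g = 0 ∨ m = 0 := by
  by_contra! h
  exact h.2 (by simpa [trivialGrading, h.1] using hm)

noncomputable instance [DecidableEq G] : DirectSum.Decomposition (trivialGrading G M) :=
  DirectSum.Decomposition.ofAddHom (trivialGrading G M)
    ((DirectSum.of (fun g => trivialGrading G M g) 0).comp
      ((AddMonoidHom.id M).codRestrict _ (mem_trivialGrading_zero G)))
    (by
      ext m
      exact DirectSum.coeAddMonoidHom_of _ _ _)
    (by
      ext g ⟨m, hm⟩ : 2
      obtain rfl | rfl := eq_zero_or_of_mem_trivialGrading hm
      · rw [AddMonoidHom.comp_assoc, AddMonoidHom.comp_apply, AddMonoidHom.comp_apply]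
        congr 1
        exact Subtype.ext (DirectSum.coeAddMonoidHom_of _ _ _)
      · exact (map_zero _).trans (map_zero _).symm)

variable (R M) in
theorem isGradedModule_trivialGrading :
    IsGradedModule (trivialGrading G R) (trivialGrading G M) := by
  classical
  refine ⟨fun {g g' r m} hr hm => ?_, by
    convert DirectSum.Decomposition.isInternal (trivialGrading G M)⟩
  obtain rfl | rfl := eq_zero_or_of_mem_trivialGrading hr
  · obtain rfl | rfl := eq_zero_or_of_mem_trivialGrading hm
    · exact (add_zero (0 : G)).symm ▸ mem_trivialGrading_zero G (r • m)
    · rw [smul_zero]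
      exact zero_mem _
  · rw [zero_smul]
    exact zero_mem _

variable (R) in
theorem isGradedRing_trivialGrading : IsGradedRing (trivialGrading G R) :=
  ⟨mem_trivialGrading_zero G 1, isGradedModule_trivialGrading G R R⟩

noncomputable instance [DecidableEq G] : GradedRing (trivialGrading G R) where
  one_mem := mem_trivialGrading_zero G 1
  mul_mem _ _ _ _ := (isGradedRing_trivialGrading G R).2.1

variable {G} (M) in
theorem coarsen_trivialGrading (ψ : G →+ H) :
    coarsen ψ (trivialGrading G M) = trivialGrading H M := by
  funext h
  refine le_antisymm (iSup₂_le fun g hg m hm => ?_) (iSup_le ?_)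
  · obtain rfl : ψ g = h := hg
    obtain rfl | rfl := eq_zero_or_of_mem_trivialGrading hm
    · exact (map_zero ψ).symm ▸ mem_trivialGrading_zero H m
    · exact zero_mem _
  · rintro rfl m -
    exact map_zero ψ ▸ mem_coarsen (mem_trivialGrading_zero G m)

variable {G} in
theorem isGradedHom_trivialGrading {N : Type} [AddCommGroup N] [Module R N]
    {𝒩 : G → AddSubgroup N} {f : M →ₗ[R] N} (hf : ∀ m, f m ∈ 𝒩 0) :
    IsGradedHom (trivialGrading G M) 𝒩 f := by
  intro g m hm
  obtain rfl | rfl := eq_zero_or_of_mem_trivialGrading hm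
  · exact hf m
  · exact (map_zero f).symm ▸ zero_mem _

end TrivialGrading

section PiRing

variable {G H I K M : Type} [AddCommGroup G] [AddCommGroup H] [CommRing K] [AddCommGroup M]
  [Module (I → K) M] [DecidableEq I]

attribute [local instance] Finsupp.pointwiseModule

omit [DecidableEq I] in
theorem pointwise_smul_single (r : I → K) (n : I) (a : K) :
    r • Finsupp.single n a = Finsupp.single n (r n * a) := by
  ext m
  obtain rfl | hmn := eq_or_ne n m <;> simp [*]

variable (K) in
/-- The linear map on finitely supported functions that sends the idempotent `Pi.single n 1`
to its multiple of `x n`. -/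
noncomputable def sumSingleSMul (x : I → M) : (I →₀ K) →ₗ[I → K] M :=
  let f : (I →₀ K) →+ M := Finsupp.liftAddHom fun n =>
    ((smulAddHom (I → K) M).flip (x n)).comp (AddMonoidHom.single (fun _ => K) n)
  { f with
    map_smul' := fun r c => by
      have hf (n : I) (a : K) : f (Finsupp.single n a) = (Pi.single n a : I → K) • x n :=
        Finsupp.liftAddHom_apply_single _ n a
      have hr : f.comp (smulAddHom (I → K) _ r) = (smulAddHom (I → K) M r).comp f :=
        Finsupp.addHom_ext fun n a => by
          simp only [AddMonoidHom.comp_apply, smulAddHom_apply, pointwise_smul_single, hf,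
            smul_smul, Pi.single_mul_right]
      exact DFunLike.congr_fun hr c }

theorem sumSingleSMul_single (x : I → M) (n : I) (a : K) :
    sumSingleSMul K x (Finsupp.single n a) = (Pi.single n a : I → K) • x n :=
  Finsupp.liftAddHom_apply_single _ n a

theorem sumSingleSMul_mem {x : I → M} {S : AddSubgroup M} (hx : ∀ r : I → K, ∀ n, r • x n ∈ S)
    (c : I →₀ K) : sumSingleSMul K x c ∈ S := by
  induction c using Finsupp.induction_linear with
  | zero => exact (map_zero (sumSingleSMul K x)).symm ▸ zero_mem S
  | add c c' hc hc' => exact (map_add (sumSingleSMul K x) c c').symm ▸ add_mem hc hc'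
  | single n a => exact (sumSingleSMul_single x n a).symm ▸ hx _ n

theorem IsInjectiveGradedModule.exists_single_eq {ℳ : H → AddSubgroup M}
    (hℳ : IsInjectiveGradedModule (trivialGrading H (I → K)) ℳ) {x : I → M}
    (hx : ∀ r : I → K, ∀ n, r • x n ∈ ℳ 0) :
    ∃ k : (I → K) →ₗ[I → K] M, ∀ n, k (Pi.single n 1) = (Pi.single n 1 : I → K) • x n := by
  let i : (I →₀ K) →ₗ[I → K] I → K :=
    { Finsupp.coeFnAddHom with map_smul' := Finsupp.coe_pointwise_smul }
  obtain ⟨k, -, hk⟩ := hℳ _ _ _ _ (isGradedModule_trivialGrading H _ (I →₀ K))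
    (isGradedModule_trivialGrading H _ (I → K)) i DFunLike.coe_injective
    (isGradedHom_trivialGrading fun c => mem_trivialGrading_zero H (i c)) (sumSingleSMul K x)
    (isGradedHom_trivialGrading (sumSingleSMul_mem hx))
  refine ⟨k, fun n => ?_⟩
  rw [← sumSingleSMul_single, ← hk, LinearMap.comp_apply]
  exact congrArg k (Finsupp.single_eq_pi_single n 1).symm

theorem IsGradedModule.finite_of_single_smul_ne_zero {ℳ : G → AddSubgroup M}
    (hℳ : IsGradedModule (trivialGrading G (I → K)) ℳ) {ι : I → G} (hι : Function.Injective ι)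
    {x : I → M} (hx : ∀ n, x n ∈ ℳ (ι n)) (hx_ne : ∀ n, (Pi.single n 1 : I → K) • x n ≠ 0)
    (k : (I → K) →ₗ[I → K] M) (hk : ∀ n, k (Pi.single n 1) = (Pi.single n 1 : I → K) • x n) :
    Finite I := by
  classical
  let := hℳ.isInternal.chooseDecomposition
  have hsmul (n : I) (m : M) : homogeneousComponent ℳ (ι n) ((Pi.single n 1 : I → K) • m) =
      (Pi.single n 1 : I → K) • homogeneousComponent ℳ (ι n) m := by
    simpa using hℳ.homogeneousComponent_smul (mem_trivialGrading_zero G _) (ι n) m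
  have hcomponent (n : I) :
      (Pi.single n 1 : I → K) • homogeneousComponent ℳ (ι n) (k 1) =
        (Pi.single n 1 : I → K) • x n := by
    rw [← hsmul, ← map_smul, smul_eq_mul, mul_one, hk, hsmul, homogeneousComponent_of_mem ℳ (hx n),
      if_pos rfl]
  have hmem (n : I) : ι n ∈ {g | homogeneousComponent ℳ g (k 1) ≠ 0} := fun h0 =>
    hx_ne n (by rw [← hcomponent, h0, smul_zero])
  have := (finite_setOf_homogeneousComponent_ne_zero ℳ (k 1)).to_subtype
  exact Finite.of_injective (Set.codRestrict ι _ hmem) (hι.codRestrict hmem)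

end PiRing

theorem exists_smul_characterModule_ne_zero {R : Type*} [CommRing R] {r : R} (hr : r ≠ 0) :
    ∃ χ : CharacterModule R, r • χ ≠ 0 := by
  obtain ⟨χ, hχ⟩ := CharacterModule.exists_character_apply_ne_zero_of_ne_zero hr
  refine ⟨χ, fun h => hχ ?_⟩
  calc χ r = (r • χ) 1 := by rw [CharacterModule.smul_apply, smul_eq_mul, mul_one]
    _ = 0 := DFunLike.congr_fun h 1

theorem finite_ker_of_isInjectiveGradedModule_coarsen {G H : Type} [AddCommGroup G]
    [AddCommGroup H] [DecidableEq G] {ψ : G →+ H} (K : Type) [CommRing K] [Nontrivial K]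
    (hinj : IsInjectiveGradedModule (trivialGrading H (ψ.ker → K))
      (coarsen ψ (Cofree.grading (trivialGrading G (ψ.ker → K)) (CharacterModule (ψ.ker → K))))) :
    Finite ψ.ker := by
  let 𝒜 := trivialGrading G (ψ.ker → K)
  let E := CharacterModule (ψ.ker → K)
  choose χ hχ using fun n : ψ.ker =>
    exists_smul_characterModule_ne_zero (r := (Pi.single n 1 : ψ.ker → K)) (by simp)
  let x (n : ψ.ker) : Cofree 𝒜 E := Cofree.of 𝒜 E n (χ n)
  have hsmul_x (r : ψ.ker → K) (n : ψ.ker) : r • x n = Cofree.of 𝒜 E n (r • χ n) := by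
    simpa using Cofree.smul_of (mem_trivialGrading_zero G r) (n : G) (χ n)
  have hx_mem (r : ψ.ker → K) (n : ψ.ker) : r • x n ∈ coarsen ψ (Cofree.grading 𝒜 E) 0 := by
    rw [hsmul_x, ← n.2]
    exact mem_coarsen (Cofree.of_mem_grading 𝒜 _ _)
  obtain ⟨k, hk⟩ := hinj.exists_single_eq hx_mem
  refine (Cofree.isGradedModule 𝒜 E).finite_of_single_smul_ne_zero Subtype.val_injective
    (fun n => Cofree.of_mem_grading 𝒜 _ (χ n)) (fun n => ?_) k hk
  rw [hsmul_x]
  exact (map_ne_zero_iff _ (Cofree.of_injective 𝒜 E _)).2 (hχ n)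

theorem ker_finite_iff_coarsening_preserves_injectivity_general
    {G H : Type} [AddCommGroup G] [AddCommGroup H] (ψ : G →+ H) :
    Finite ψ.ker ↔
      ∀ (R : Type) [CommRing R], ∀ 𝒜 : G → AddSubgroup R, IsGradedRing 𝒜 →
        ∀ (M : Type) [AddCommGroup M] [Module R M], ∀ ℳ : G → AddSubgroup M,
          IsGradedModule 𝒜 ℳ → IsInjectiveGradedModule 𝒜 ℳ →
            IsInjectiveGradedModule (coarsen ψ 𝒜) (coarsen ψ ℳ) := by
  classical
  constructor
  · intro _ R _ 𝒜 h𝒜 M _ _ ℳ hℳ hinj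
    exact hinj.coarsen (finite_fiber_of_finite_ker ψ) h𝒜 hℳ
  · intro hψ
    let R := ψ.ker → ℤ
    have hE : Module.Injective R (CharacterModule R) :=
      Module.Flat.iff_characterModule_injective.1 inferInstance
    have hcoarsen := hψ R _ (isGradedRing_trivialGrading G R) _ _
      (Cofree.isGradedModule _ (CharacterModule R))
      (Cofree.isInjectiveGradedModule _ (CharacterModule R))
    rw [coarsen_trivialGrading] at hcoarsen
    exact finite_ker_of_isInjectiveGradedModule_coarsen ℤ hcoarsen

/-- **Statement 7** (Theorem 1.80): `ker ψ` is finite if and only if for every `G`-graded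
commutative ring `R` the `ψ`-coarsening functor preserves injectivity of graded modules. -/
theorem ker_finite_iff_coarsening_preserves_injectivity
    {G H : Type} [AddCommGroup G] [AddCommGroup H]
    (ψ : G →+ H) (hψ : Function.Surjective ψ) :
    Finite ψ.ker ↔
      ∀ (R : Type) [CommRing R], ∀ 𝒜 : G → AddSubgroup R, IsGradedRing 𝒜 →
        ∀ (M : Type) [AddCommGroup M] [Module R M], ∀ ℳ : G → AddSubgroup M,
          IsGradedModule 𝒜 ℳ → IsInjectiveGradedModule 𝒜 ℳ →
            IsInjectiveGradedModule (coarsen ψ 𝒜) (coarsen ψ ℳ) :=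
  ker_finite_iff_coarsening_preserves_injectivity_general ψ
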